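/- For every ε > 0 there is a constant C_ε > 0 such that for every integer y ≥ 1 there is N₀ with: for all integers N > N₀, all b with gcd(b,y) = 1, every real Q with 1 ≤ Q ≤ N^{1/10}, and every finite set F ⊂ [0,N] ∩ ℤ, one has ‖ Hi_{N,y,Q} ∗ 1_F ‖_{ℓ²(ℤ)} ≤ C_ε · Q^{−1+ε} · |F|^{1/2}. -/

import Mathlib

open scoped ENNReal

noncomputable section

/-- `e(t) = e^{2πit}`. -/
def e2pi (t : ℝ) : ℂ := Complex.exp (2 * Real.pi * Complex.I * t)

/-- For real `x > 0`, `M̂_x(θ) = (1/x) Σ_{0 ≤ n < x} e(-nθ)`. -/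
def Mhat (x θ : ℝ) : ℂ :=
  ((1 / x : ℝ) : ℂ) * ∑ n ∈ Finset.range ⌈x⌉₊, e2pi (-(n * θ))

/-- The Gauss-type sum `Υ(a,q)`. -/
def Ups (y : ℕ) (b : ℤ) (a : ℤ) (q : ℕ) : ℂ :=
  ((Nat.totient y : ℂ) / (Nat.totient (Nat.lcm y q) : ℂ)) *
    ∑ r ∈ (Finset.Icc 1 q).filter
        (fun r : ℕ => Nat.gcd r q = 1 ∧
          (r : ℤ) % (Nat.gcd y q : ℤ) = b % (Nat.gcd y q : ℤ)),
      e2pi (-((((r : ℤ) * a : ℤ) : ℝ) / (q : ℝ)))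

/-- The Ramanujan height `h_y(q)` of `q` relative to `y`. -/
def hgt (y q : ℕ) : ℕ :=
  if 1 < Nat.gcd y q ∧ Nat.gcd y q < q ∧ 1 < Nat.gcd (Nat.gcd y q) (q / Nat.gcd y q) then 0
  else Nat.lcm y q / y

/-- The multiplier piece `L̂^{a,q}_{N,y}(ξ) = Υ(a,q) M̂_{N/ℓ}(ℓ(ξ-a/q)) χ(ℓ²(ξ-a/q))`. -/
def Lhat (χ : ℝ → ℝ) (y : ℕ) (b : ℤ) (N : ℝ) (a q : ℕ) (ξ : ℝ) : ℂ :=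
  Ups y b (a : ℤ) q *
    Mhat (N / (Nat.lcm y q : ℝ)) ((Nat.lcm y q : ℝ) * (ξ - (a : ℝ) / (q : ℝ))) *
    ((χ ((Nat.lcm y q : ℝ) ^ 2 * (ξ - (a : ℝ) / (q : ℝ))) : ℝ) : ℂ)

/-- The kernel `L^{a,q}_{N,y}(x) = ∫₀¹ L̂^{a,q}_{N,y}(ξ) e(xξ) dξ`. -/
def Lker (χ : ℝ → ℝ) (y : ℕ) (b : ℤ) (N : ℝ) (a q : ℕ) (x : ℤ) : ℂ :=
  ∫ ξ in (0:ℝ)..1, Lhat χ y b N a q ξ * e2pi ((x : ℝ) * ξ)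

/-- The High kernel `Hi_{N,y,Q} = Σ_{q : Q ≤ h_y(q) ≤ N^{1/10}} Σ_{a ∈ A_q} L^{a,q}_{N,y}`. -/
def HiK (χ : ℝ → ℝ) (y : ℕ) (b : ℤ) (N : ℕ) (Q : ℝ) (x : ℤ) : ℂ :=
  ∑ q ∈ (Finset.Icc 1 (y * ⌈(N : ℝ) ^ ((1:ℝ)/10)⌉₊)).filter
      (fun q : ℕ => Q ≤ (hgt y q : ℝ) ∧ (hgt y q : ℝ) ≤ (N : ℝ) ^ ((1:ℝ)/10)),
    ∑ a ∈ (Finset.Icc 1 q).filter (fun a : ℕ => Nat.gcd a q = 1),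
      Lker χ y b (N : ℝ) a q x

/-- `(Hi_{N,y,Q} ∗ 1_F)(x)`. -/
def HiConv (χ : ℝ → ℝ) (y : ℕ) (b : ℤ) (N : ℕ) (Q : ℝ) (F : Finset ℤ) (x : ℤ) : ℂ :=
  ∑ z ∈ F, HiK χ y b N Q (x - z)

theorem sum_nthRootsFinset_one (n : ℕ) (hn : 0 < n) :
    ∑ ζ ∈ Polynomial.nthRootsFinset n (1 : ℂ), ζ = if n = 1 then 1 else 0 := by
  have hu := Complex.isPrimitiveRoot_exp n hn.ne'
  set u := Complex.exp (2 * Real.pi * Complex.I / n)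
  have : ∑ ζ ∈ Polynomial.nthRootsFinset n (1 : ℂ), ζ = ∑ i ∈ Finset.range n, u ^ i := by
    symm
    refine Finset.sum_bij (fun i _ => u ^ i) ?_ ?_ ?_ ?_
    · intro i _
      rw [Polynomial.mem_nthRootsFinset hn, ← pow_mul, mul_comm, pow_mul, hu.pow_eq_one, one_pow]
    · intro i hi j hj h
      exact hu.pow_inj (Finset.mem_range.1 hi) (Finset.mem_range.1 hj) h
    · intro ζ hζ
      rw [Polynomial.mem_nthRootsFinset hn] at hζ
      have : NeZero n := ⟨hn.ne'⟩
      obtain ⟨i, hi, h⟩ := hu.eq_pow_of_pow_eq_one hζ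
      exact ⟨i, Finset.mem_range.2 hi, h⟩
    · intros; rfl
  rw [this]
  split_ifs with h
  · subst h; simp
  · exact hu.geom_sum_eq_zero (by omega)

theorem sum_primitiveRoots_eq_moebius (n : ℕ) (hn : 0 < n) :
    ∑ ζ ∈ primitiveRoots n ℂ, ζ = (ArithmeticFunction.moebius n : ℂ) := by
  have key := (ArithmeticFunction.sum_eq_iff_sum_mul_moebius_eq
    (f := fun n => ∑ ζ ∈ primitiveRoots n ℂ, ζ) (g := fun n => if n = 1 then (1 : ℂ) else 0)).1
    (by
      intro m hm
      rw [← sum_nthRootsFinset_one m hm, IsPrimitiveRoot.nthRoots_one_eq_biUnion_primitiveRoots,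
        Finset.sum_biUnion]
      intro i _ j _ hij
      exact IsPrimitiveRoot.disjoint hij) n hn
  rw [← key, Finset.sum_eq_single (n, 1)]
  · simp
  · rintro ⟨i, j⟩ hij hne
    have : j ≠ 1 := by
      rintro rfl
      rw [Nat.mem_divisorsAntidiagonal] at hij
      exact hne (by simpa using hij.1)
    simp [this]
  · intro h
    exact absurd (by simp [Nat.mem_divisorsAntidiagonal, hn.ne']) h

theorem norm_sum_primitiveRoots_le_one (n : ℕ) (hn : 0 < n) :
    ‖∑ ζ ∈ primitiveRoots n ℂ, ζ‖ ≤ 1 := by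
  rw [sum_primitiveRoots_eq_moebius n hn, Complex.norm_intCast]
  exact_mod_cast ArithmeticFunction.abs_moebius_le_one

/-- Summing powers of a primitive `gk`-th root of unity over reduced residues in a fixed class
modulo `g` gives, up to a phase, the sum of all primitive `k`-th roots of unity. -/
theorem sum_pow_residue_class {g k : ℕ} (hg : 0 < g) (hk : 0 < k) (hgk : Nat.Coprime g k)
    {b : ℤ} (hb : IsCoprime b (g : ℤ)) {u : ℂ} (hu : IsPrimitiveRoot u (g * k)) :
    ∃ B : ℤ, ∑ r ∈ (Finset.Icc 1 (g * k)).filter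
        (fun r : ℕ => Nat.gcd r (g * k) = 1 ∧ (r : ℤ) % (g : ℤ) = b % (g : ℤ)), u ^ r
      = u ^ B * ∑ ζ ∈ primitiveRoots k ℂ, ζ := by
  have hq : 0 < g * k := Nat.mul_pos hg hk
  have hu0 : u ≠ 0 := hu.ne_zero hq.ne'
  have hug : IsPrimitiveRoot (u ^ g) k := hu.pow hq rfl
  have hgk' : IsCoprime (g : ℤ) (k : ℤ) := Nat.isCoprime_iff_coprime.2 hgk
  obtain ⟨s, t, hst⟩ := hgk'
  refine ⟨b * (t * k), ?_⟩
  have hBb : (g : ℤ) ∣ b - b * (t * k) := ⟨b * s, by linear_combination (-b) * hst⟩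
  have hkB : (k : ℤ) ∣ b * (t * k) := ⟨b * t, by ring⟩
  set B := b * (t * k) with hB
  rw [Finset.mul_sum]
  refine Finset.sum_bij (fun r _ => u ^ ((r : ℤ) - B)) ?_ ?_ ?_ ?_
  · intro r hr
    obtain ⟨-, hr1, hr2⟩ := Finset.mem_filter.1 hr
    rw [mem_primitiveRoots hk]
    have h1 : (g : ℤ) ∣ (r : ℤ) - B := by
      have : (g : ℤ) ∣ (r : ℤ) - b := Int.ModEq.dvd (Eq.symm hr2 : b ≡ r [ZMOD g])
      simpa using dvd_add this hBb
    obtain ⟨c, hc⟩ := h1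
    obtain ⟨d, hd⟩ := hkB
    have h2 : IsCoprime (r : ℤ) (k : ℤ) :=
      Nat.isCoprime_iff_coprime.2 (Nat.Coprime.coprime_mul_left_right hr1)
    have h3 : IsCoprime c (k : ℤ) := by
      have : (r : ℤ) = c * g + k * d := by rw [← hd]; linarith
      rw [this] at h2
      exact (IsCoprime.of_add_mul_left_left h2).of_mul_left_left
    rw [hc, zpow_mul, zpow_natCast]
    exact hug.zpow_of_gcd_eq_one c (Int.isCoprime_iff_gcd_eq_one.1 h3)
  · intro r hr r' hr' h
    simp only [Finset.mem_filter, Finset.mem_Icc] at hr hr'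
    have h1 : u ^ ((r : ℤ) - r') = 1 := by
      have : (r : ℤ) - r' = (r - B) - (r' - B) := by ring
      rw [this, zpow_sub₀ hu0, h, div_self (zpow_ne_zero _ hu0)]
    have h2 := (hu.zpow_eq_one_iff_dvd _).1 h1
    have h3 := Int.eq_zero_of_abs_lt_dvd h2 (by
      rw [abs_lt]; push_cast; constructor <;> (have := hr.1; have := hr'.1; zify at *; linarith))
    omega
  · intro ζ hζ
    rw [mem_primitiveRoots hk] at hζ
    have : NeZero k := ⟨hk.ne'⟩
    obtain ⟨i, hi, hik, rfl⟩ := hug.isPrimitiveRoot_iff.1 hζ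
    obtain ⟨r, hr, hrm⟩ : ∃ r : ℕ, r ∈ Finset.Icc 1 (g * k) ∧
        ((g * k : ℕ) : ℤ) ∣ (r : ℤ) - (B + g * i) := by
      have hpos : (0 : ℤ) < ((g * k : ℕ) : ℤ) := by exact_mod_cast hq
      have h1 := Int.emod_nonneg (B + g * i - 1) hpos.ne'
      have h2 := Int.emod_lt_of_pos (B + g * i - 1) hpos
      have h3 := Int.mul_ediv_add_emod (B + g * i - 1) ((g * k : ℕ) : ℤ)
      obtain ⟨w, hw⟩ := Int.eq_ofNat_of_zero_le h1
      rw [hw] at h2 h3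
      refine ⟨w + 1, Finset.mem_Icc.2 (by omega),
        -((B + g * i - 1) / ((g * k : ℕ) : ℤ)), ?_⟩
      push_cast at h3 ⊢
      linear_combination h3
    have hgi : IsCoprime ((g : ℤ) * i) (k : ℤ) :=
      IsCoprime.mul_left ⟨s, t, hst⟩ (Nat.isCoprime_iff_coprime.2 hik)
    have hgr : (g : ℤ) ∣ (r : ℤ) - b := by
      have h1 : (g : ℤ) ∣ (r : ℤ) - (B + g * i) := dvd_trans ⟨k, by push_cast; ring⟩ hrm
      have h2 : (r : ℤ) - b = (r - (B + g * i)) - (b - B) + g * i := by ring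
      rw [h2]
      exact dvd_add (dvd_sub h1 hBb) ⟨i, rfl⟩
    have hkr : (k : ℤ) ∣ (r : ℤ) - g * i := by
      have h1 : (k : ℤ) ∣ (r : ℤ) - (B + g * i) := dvd_trans ⟨g, by push_cast; ring⟩ hrm
      have h2 : (r : ℤ) - g * i = (r - (B + g * i)) + B := by ring
      rw [h2]
      exact dvd_add h1 hkB
    refine ⟨r, Finset.mem_filter.2 ⟨hr, ?_, ?_⟩, ?_⟩
    · have h1 : IsCoprime (r : ℤ) (g : ℤ) := by
        obtain ⟨c, hc⟩ := hgr
        rw [sub_eq_iff_eq_add'.1 hc]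
        exact hb.add_mul_left_left c
      have h2 : IsCoprime (r : ℤ) (k : ℤ) := by
        obtain ⟨c, hc⟩ := hkr
        rw [sub_eq_iff_eq_add'.1 hc]
        exact hgi.add_mul_left_left c
      exact Nat.isCoprime_iff_coprime.1 (by push_cast; exact h1.mul_right h2)
    · exact (Int.ModEq.symm (Int.modEq_iff_dvd.2 hgr))
    · have : (r : ℤ) - B = (r - (B + g * i)) + ((g * i : ℕ) : ℤ) := by push_cast; ring
      rw [this, zpow_add₀ hu0, (hu.zpow_eq_one_iff_dvd _).2 hrm, one_mul, zpow_natCast, pow_mul]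
  · intro r _
    rw [← zpow_add₀ hu0, add_sub_cancel, zpow_natCast]

theorem e2pi_add (s t : ℝ) : e2pi (s + t) = e2pi s * e2pi t := by
  simp [e2pi, ← Complex.exp_add, mul_add]

theorem norm_e2pi (t : ℝ) : ‖e2pi t‖ = 1 := by
  simp [e2pi, Complex.norm_exp]

theorem e2pi_natCast_mul (n : ℕ) (t : ℝ) : e2pi (n * t) = e2pi t ^ n := by
  rw [e2pi, e2pi, ← Complex.exp_nat_mul]
  push_cast
  ring_nf

theorem continuous_e2pi : Continuous e2pi := by
  unfold e2pi
  fun_prop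

theorem isPrimitiveRoot_e2pi_neg_div {a q : ℕ} (hq : 0 < q) (haq : Nat.Coprime a q) :
    IsPrimitiveRoot (e2pi (-((a : ℝ) / q))) q := by
  have h := (Complex.isPrimitiveRoot_exp_of_coprime a q hq.ne' haq).inv
  rw [← Complex.exp_neg] at h
  rwa [show e2pi (-((a : ℝ) / q)) = Complex.exp (-(2 * Real.pi * Complex.I * (a / q))) by
    rw [e2pi]
    congr 1
    push_cast
    ring]

theorem hgt_eq_of_ne_zero {y q : ℕ} (hq : 0 < q) (h : hgt y q ≠ 0) :
    0 < hgt y q ∧ q = Nat.gcd y q * hgt y q ∧ Nat.lcm y q = y * hgt y q ∧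
      Nat.Coprime (Nat.gcd y q) (hgt y q) ∧ Nat.Coprime y (hgt y q) := by
  have hg : 0 < Nat.gcd y q := Nat.gcd_pos_of_pos_right y hq
  have hcond : ¬ (1 < Nat.gcd y q ∧ Nat.gcd y q < q ∧
      1 < Nat.gcd (Nat.gcd y q) (q / Nat.gcd y q)) := by
    intro hc
    exact h (by rw [hgt, if_pos hc])
  have hh : hgt y q = Nat.lcm y q / y := by rw [hgt, if_neg hcond]
  have hy : 0 < y := by
    rcases Nat.eq_zero_or_pos y with rfl | hy
    · simp [hh] at h
    · exact hy
  obtain ⟨k, hk⟩ := Nat.gcd_dvd_right y q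
  obtain ⟨m, hm⟩ := Nat.gcd_dvd_left y q
  have hl : Nat.lcm y q = y * k := by
    apply Nat.eq_of_mul_eq_mul_left hg
    rw [Nat.gcd_mul_lcm]
    calc y * q = y * (Nat.gcd y q * k) := by rw [← hk]
      _ = Nat.gcd y q * (y * k) := by ring
  have hhk : hgt y q = k := by rw [hh, hl, Nat.mul_div_cancel_left _ hy]
  have hqg : q / Nat.gcd y q = k := Nat.div_eq_of_eq_mul_right hg hk
  have hmk : Nat.Coprime m k := by
    have := Nat.coprime_div_gcd_div_gcd (m := y) (n := q) hg
    rwa [hqg, Nat.div_eq_of_eq_mul_right hg hm] at this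
  have hkpos : 0 < k := by omega
  have hgk : Nat.Coprime (Nat.gcd y q) k := by
    rw [hqg] at hcond
    by_contra hne
    have h1 : 0 < Nat.gcd (Nat.gcd y q) k := Nat.gcd_pos_of_pos_left _ hg
    have h2 : 1 < Nat.gcd (Nat.gcd y q) k := by
      unfold Nat.Coprime at hne; omega
    refine hcond ⟨?_, ?_, h2⟩
    · exact h2.trans_le (Nat.le_of_dvd hg (Nat.gcd_dvd_left _ _))
    · have : 1 < k := h2.trans_le (Nat.le_of_dvd hkpos (Nat.gcd_dvd_right _ _))
      calc Nat.gcd y q < Nat.gcd y q * k := (Nat.lt_mul_iff_one_lt_right hg).2 this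
        _ = q := hk.symm
  rw [hhk]
  refine ⟨hkpos, hk, hl, hgk, ?_⟩
  rw [hm]
  exact Nat.Coprime.mul_left hgk hmk

theorem norm_Ups_le {y q a : ℕ} {b : ℤ} (hq : 0 < q) (haq : Nat.gcd a q = 1)
    (hb : Int.gcd b y = 1) (h : hgt y q ≠ 0) :
    ‖Ups y b (a : ℤ) q‖ ≤ ((Nat.totient (hgt y q) : ℝ))⁻¹ := by
  obtain ⟨hk, hqk, hl, hgk, hyk⟩ := hgt_eq_of_ne_zero hq h
  have hy : 0 < y := Nat.pos_of_ne_zero (by rintro rfl; simp [hgt] at h)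
  have hg : 0 < Nat.gcd y q := Nat.gcd_pos_of_pos_right y hq
  have hbg : IsCoprime b (Nat.gcd y q : ℤ) := by
    obtain ⟨m, hm⟩ := Nat.gcd_dvd_left y q
    have h1 : IsCoprime b (y : ℤ) := Int.isCoprime_iff_gcd_eq_one.2 hb
    rw [hm] at h1
    push_cast at h1
    exact h1.of_mul_right_left
  have hu := isPrimitiveRoot_e2pi_neg_div hq haq
  set u := e2pi (-((a : ℝ) / q)) with hu_def
  have hsum : ‖∑ r ∈ (Finset.Icc 1 q).filter
        (fun r : ℕ => Nat.gcd r q = 1 ∧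
          (r : ℤ) % (Nat.gcd y q : ℤ) = b % (Nat.gcd y q : ℤ)),
      e2pi (-((((r : ℤ) * a : ℤ) : ℝ) / (q : ℝ)))‖ ≤ 1 := by
    have h1 : ∀ r : ℕ, e2pi (-((((r : ℤ) * a : ℤ) : ℝ) / (q : ℝ))) = u ^ r := by
      intro r
      rw [hu_def, ← e2pi_natCast_mul]
      congr 1
      push_cast
      ring
    simp_rw [h1]
    rw [hqk] at hu
    obtain ⟨B, hB⟩ := sum_pow_residue_class hg hk hgk hbg hu
    rw [← hqk] at hB
    rw [hB, norm_mul, norm_zpow, hu_def, norm_e2pi, one_zpow, one_mul]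
    exact norm_sum_primitiveRoots_le_one _ hk
  have hty : (0 : ℝ) < Nat.totient y := by exact_mod_cast Nat.totient_pos.2 hy
  have htk : (0 : ℝ) < Nat.totient (hgt y q) := by exact_mod_cast Nat.totient_pos.2 hk
  rw [Ups, norm_mul, hl, Nat.totient_mul hyk, norm_div, Complex.norm_natCast,
    Complex.norm_natCast, Nat.cast_mul]
  rw [show (Nat.totient y : ℝ) / (Nat.totient y * Nat.totient (hgt y q))
    = (Nat.totient (hgt y q) : ℝ)⁻¹ by field_simp]
  exact mul_le_of_le_one_right (inv_nonneg.2 htk.le) hsum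

theorem exists_rpow_le_mul_totient {ε : ℝ} (hε : 0 < ε) :
    ∃ C : ℝ, 0 < C ∧ ∀ n : ℕ, 0 < n → (n : ℝ) ^ (1 - ε) ≤ C * Nat.totient n := by
  obtain ⟨P, hP⟩ := exists_nat_ge ((2 : ℝ) ^ (1 / ε))
  refine ⟨2 ^ P, by positivity, fun n hn => ?_⟩
  have hn' : (0 : ℝ) < n := by exact_mod_cast hn
  have htot : (Nat.totient n : ℝ) = n * ∏ p ∈ n.primeFactors, (1 - (p : ℝ)⁻¹) := by
    have := congrArg (fun x : ℚ => (x : ℝ)) (Nat.totient_eq_mul_prod_factors n)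
    push_cast at this
    exact this
  have hfac : ∀ p ∈ n.primeFactors,
      (1 : ℝ) ≤ (if p < P then 2 else 1) * (p : ℝ) ^ ε * (1 - (p : ℝ)⁻¹) := by
    intro p hp
    have hp2 : (2 : ℝ) ≤ p := by exact_mod_cast (Nat.prime_of_mem_primeFactors hp).two_le
    have hhalf : (1 / 2 : ℝ) ≤ 1 - (p : ℝ)⁻¹ := by
      have : (p : ℝ)⁻¹ ≤ 2⁻¹ := inv_anti₀ (by norm_num) hp2
      linarith
    have h2 : (2 : ℝ) ≤ (if p < P then 2 else 1) * (p : ℝ) ^ ε := by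
      split_ifs with hpP
      · have : (1 : ℝ) ≤ (p : ℝ) ^ ε := Real.one_le_rpow (by linarith) hε.le
        linarith
      · have h3 : (2 : ℝ) ^ (1 / ε) ≤ p := hP.trans (by exact_mod_cast not_lt.1 hpP)
        have h4 := Real.rpow_le_rpow (by positivity) h3 hε.le
        rw [← Real.rpow_mul (by norm_num), one_div_mul_cancel hε.ne', Real.rpow_one] at h4
        linarith
    nlinarith
  have hprod := Finset.prod_le_prod (s := n.primeFactors) (fun _ _ => zero_le_one) hfac
  rw [Finset.prod_const_one, Finset.prod_mul_distrib, Finset.prod_mul_distrib] at hprod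
  have hprod1 : (0 : ℝ) ≤ ∏ p ∈ n.primeFactors, (1 - (p : ℝ)⁻¹) := by
    refine Finset.prod_nonneg fun p hp => ?_
    have hp1 : (1 : ℝ) ≤ p := by exact_mod_cast (Nat.prime_of_mem_primeFactors hp).one_le
    have := inv_le_one_of_one_le₀ hp1
    linarith
  have hc : (∏ p ∈ n.primeFactors, (if p < P then (2 : ℝ) else 1)) ≤ 2 ^ P := by
    rw [Finset.prod_ite, Finset.prod_const, Finset.prod_const_one, mul_one]
    refine pow_le_pow_right₀ (by norm_num) ?_
    calc _ ≤ (Finset.range P).card := Finset.card_le_card fun p hp => by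
          simpa using (Finset.mem_filter.1 hp).2
      _ = P := Finset.card_range P
  have he : ∏ p ∈ n.primeFactors, (p : ℝ) ^ ε ≤ (n : ℝ) ^ ε := by
    rw [Real.finsetProd_rpow _ _ (fun _ _ => by positivity)]
    refine Real.rpow_le_rpow (by positivity) ?_ hε.le
    rw [← Nat.cast_prod]
    exact Nat.cast_le.2 <| Nat.le_of_dvd hn (Nat.prod_primeFactors_dvd n)
  calc (n : ℝ) ^ (1 - ε) ≤ (n : ℝ) ^ (1 - ε) *
        (2 ^ P * (n : ℝ) ^ ε * ∏ p ∈ n.primeFactors, (1 - (p : ℝ)⁻¹)) := by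
        refine le_mul_of_one_le_right (by positivity) (hprod.trans ?_)
        gcongr
    _ = 2 ^ P * (((n : ℝ) ^ (1 - ε) * (n : ℝ) ^ ε) *
        ∏ p ∈ n.primeFactors, (1 - (p : ℝ)⁻¹)) := by ring
    _ = 2 ^ P * Nat.totient n := by
        rw [← Real.rpow_add hn', sub_add_cancel, Real.rpow_one, htot]

theorem norm_Mhat_le_two {x : ℝ} (hx : 1 ≤ x) (θ : ℝ) : ‖Mhat x θ‖ ≤ 2 := by
  have h1 : ‖∑ n ∈ Finset.range ⌈x⌉₊, e2pi (-(n * θ))‖ ≤ x + 1 := by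
    refine (norm_sum_le _ _).trans ?_
    simp only [norm_e2pi, Finset.sum_const, Finset.card_range, nsmul_eq_mul, mul_one]
    exact (Nat.ceil_lt_add_one (by linarith)).le
  rw [Mhat, norm_mul, Complex.norm_real, Real.norm_of_nonneg (by positivity)]
  calc 1 / x * _ ≤ 1 / x * (x + 1) := by gcongr
    _ ≤ 2 := by rw [one_div_mul_eq_div, div_le_iff₀ (by linarith)]; linarith

theorem continuous_Lhat {χ : ℝ → ℝ} (hχ : Continuous χ) (y : ℕ) (b : ℤ) (N : ℝ) (a q : ℕ) :
    Continuous (Lhat χ y b N a q) := by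
  have := continuous_e2pi
  unfold Lhat Mhat
  fun_prop

theorem norm_Lhat_le {χ : ℝ → ℝ} (hχr : ∀ x : ℝ, χ x ∈ Set.Icc (0 : ℝ) 1) {y q a : ℕ} {b : ℤ}
    (hq : 0 < q) (haq : Nat.gcd a q = 1) (hb : Int.gcd b y = 1) (h : hgt y q ≠ 0) {N : ℝ}
    (hN : (Nat.lcm y q : ℝ) ≤ N) (ξ : ℝ) :
    ‖Lhat χ y b N a q ξ‖ ≤ 2 * ((Nat.totient (hgt y q) : ℝ))⁻¹ := by
  have hy : 0 < y := Nat.pos_of_ne_zero (by rintro rfl; simp [hgt] at h)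
  have hl0 : (0 : ℝ) < Nat.lcm y q := by exact_mod_cast Nat.lcm_pos hy hq
  have hM := norm_Mhat_le_two ((one_le_div hl0).2 hN)
    ((Nat.lcm y q : ℝ) * (ξ - (a : ℝ) / (q : ℝ)))
  obtain ⟨hχ0, hχ1⟩ := hχr ((Nat.lcm y q : ℝ) ^ 2 * (ξ - (a : ℝ) / (q : ℝ)))
  rw [Lhat, norm_mul, norm_mul, Complex.norm_real, Real.norm_of_nonneg hχ0]
  calc _ ≤ ((Nat.totient (hgt y q) : ℝ))⁻¹ * 2 * 1 := by
        gcongr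
        exact norm_Ups_le hq haq hb h
    _ = _ := by ring

theorem sum_rpow_neg_le_of_lacunary {ι : Type*} (T : Finset ι) (h : ι → ℝ) {Q δ : ℝ}
    (hQ : 0 < Q) (hδ : 0 < δ) (hT : ∀ i ∈ T, Q ≤ h i)
    (hlac : ∀ i ∈ T, ∀ j ∈ T, i ≠ j → h i ≤ h j → 2 * h i ≤ h j) :
    ∑ i ∈ T, h i ^ (-δ) ≤ Q ^ (-δ) * (1 - (2 : ℝ) ^ (-δ))⁻¹ := by
  set s : ι → ℕ := fun i => Nat.log 2 ⌊h i / Q⌋₊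
  have h1 : ∀ i ∈ T, 1 ≤ h i / Q := fun i hi => (one_le_div hQ).2 (hT i hi)
  have hlow : ∀ i ∈ T, (2 : ℝ) ^ s i ≤ h i / Q := by
    intro i hi
    have hf : ⌊h i / Q⌋₊ ≠ 0 := (Nat.floor_pos.2 (h1 i hi)).ne'
    calc (2 : ℝ) ^ s i = ((2 ^ s i : ℕ) : ℝ) := by push_cast; rfl
      _ ≤ (⌊h i / Q⌋₊ : ℝ) := Nat.cast_le.2 (Nat.pow_log_le_self 2 hf)
      _ ≤ h i / Q := Nat.floor_le (by linarith [h1 i hi])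
  have hup : ∀ i ∈ T, h i / Q < (2 : ℝ) ^ (s i + 1) := by
    intro i hi
    have := Nat.lt_pow_succ_log_self (b := 2) one_lt_two ⌊h i / Q⌋₊
    rw [Nat.floor_lt (by linarith [h1 i hi])] at this
    exact_mod_cast this
  have haux : ∀ i ∈ T, ∀ j ∈ T, s i = s j → i ≠ j → ¬ h i ≤ h j := by
    intro i hi j hj hs hne hle
    have h2 := hlac i hi j hj hne hle
    have h3 := hlow i hi
    have h4 := hup j hj
    rw [← hs, pow_succ] at h4
    rw [le_div_iff₀ hQ] at h3
    rw [div_lt_iff₀ hQ] at h4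
    linarith
  have hinj : Set.InjOn s T := by
    intro i hi j hj hs
    by_contra hne
    rcases le_total (h i) (h j) with hle | hle
    · exact haux i hi j hj hs hne hle
    · exact haux j hj i hi hs.symm (Ne.symm hne) hle
  have hr0 : (0 : ℝ) ≤ (2 : ℝ) ^ (-δ) := by positivity
  have hr1 : (2 : ℝ) ^ (-δ) < 1 := Real.rpow_lt_one_of_one_lt_of_neg one_lt_two (by linarith)
  calc ∑ i ∈ T, h i ^ (-δ) ≤ ∑ i ∈ T, Q ^ (-δ) * ((2 : ℝ) ^ (-δ)) ^ s i := by
        refine Finset.sum_le_sum fun i hi => ?_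
        have h2 : Q * 2 ^ s i ≤ h i := by
          have := hlow i hi
          rw [le_div_iff₀ hQ] at this
          linarith
        refine (Real.rpow_le_rpow_of_nonpos (by positivity) h2 (by linarith)).trans_eq ?_
        rw [Real.mul_rpow hQ.le (by positivity), ← Real.rpow_natCast, ← Real.rpow_natCast,
          ← Real.rpow_mul (by norm_num), ← Real.rpow_mul (by norm_num), mul_comm (-δ)]
    _ = Q ^ (-δ) * ∑ n ∈ T.image s, ((2 : ℝ) ^ (-δ)) ^ n := by
        rw [Finset.sum_image hinj, Finset.mul_sum]
    _ ≤ Q ^ (-δ) * (1 - (2 : ℝ) ^ (-δ))⁻¹ := by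
        gcongr
        rw [← tsum_geometric_of_lt_one hr0 hr1]
        exact (summable_geometric_of_lt_one hr0 hr1).sum_le_tsum _ (fun _ _ => by positivity)

/-- If two bumps of width `ℓ⁻²/4` around distinct reduced fractions meet, their scales differ by
a factor of at least two. -/
theorem two_mul_le_of_near_fractions {a q a' q' : ℕ} {ℓ ℓ' ξ : ℝ} (hq : 0 < q) (hq' : 0 < q')
    (hne : a * q' ≠ a' * q) (hql : (q : ℝ) ≤ ℓ) (hql' : (q' : ℝ) ≤ ℓ')
    (hξ : |ℓ ^ 2 * (ξ - a / q)| ≤ 1 / 4) (hξ' : |ℓ' ^ 2 * (ξ - a' / q')| ≤ 1 / 4)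
    (hll : ℓ ≤ ℓ') : 2 * ℓ ≤ ℓ' := by
  have hqr : (0 : ℝ) < q := by exact_mod_cast hq
  have hqr' : (0 : ℝ) < q' := by exact_mod_cast hq'
  have hl : 0 < ℓ := by linarith
  have hl' : 0 < ℓ' := by linarith
  rw [abs_mul, abs_of_pos (by positivity)] at hξ hξ'
  have hsep : 1 ≤ q * q' * |(a : ℝ) / q - a' / q'| := by
    have h1 : (1 : ℝ) ≤ |(a : ℝ) * q' - a' * q| := by
      have : (1 : ℤ) ≤ |(a : ℤ) * q' - a' * q| :=
        Int.one_le_abs (sub_ne_zero.2 (by exact_mod_cast hne))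
      exact_mod_cast this
    calc 1 ≤ |(a : ℝ) * q' - a' * q| := h1
      _ = |q * q' * ((a : ℝ) / q - a' / q')| := by congr 1; field_simp
      _ = _ := by rw [abs_mul, abs_of_pos (by positivity)]
  have htri : |(a : ℝ) / q - a' / q'| ≤ |ξ - a / q| + |ξ - a' / q'| := by
    rw [abs_sub_comm ξ (a / q)]
    exact abs_sub_le _ _ _
  have hmul : 1 ≤ ℓ * ℓ' * (|ξ - a / q| + |ξ - a' / q'|) := by
    refine hsep.trans ?_
    gcongr
  have h2 : ℓ' ^ 2 * |ξ - a' / q'| ≥ ℓ * ℓ' * |ξ - a' / q'| := by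
    rw [pow_two]; gcongr
  have h3 : ℓ * (ℓ * ℓ' * |ξ - a / q|) ≤ ℓ' * (1 / 4) := by
    calc ℓ * (ℓ * ℓ' * |ξ - a / q|) = ℓ' * (ℓ ^ 2 * |ξ - a / q|) := by ring
      _ ≤ _ := by gcongr
  nlinarith

theorem eq_of_mul_eq_mul_of_coprime {a q a' q' : ℕ} (hq : 0 < q) (h : Nat.gcd a q = 1)
    (h' : Nat.gcd a' q' = 1) (he : a * q' = a' * q) : q = q' ∧ a = a' := by
  have h1 : q ∣ q' :=
    (Nat.Coprime.symm h).dvd_of_dvd_mul_left (he ▸ Dvd.intro_left a' rfl)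
  have h2 : q' ∣ q :=
    (Nat.Coprime.symm h').dvd_of_dvd_mul_left (he ▸ Dvd.intro_left a rfl)
  obtain rfl := Nat.dvd_antisymm h1 h2
  exact ⟨rfl, Nat.eq_of_mul_eq_mul_right hq he⟩

/-- The Fourier multiplier of the High kernel. -/
def HiMult (χ : ℝ → ℝ) (y : ℕ) (b : ℤ) (N : ℕ) (Q : ℝ) (ξ : ℝ) : ℂ :=
  ∑ q ∈ (Finset.Icc 1 (y * ⌈(N : ℝ) ^ ((1:ℝ)/10)⌉₊)).filter
      (fun q : ℕ => Q ≤ (hgt y q : ℝ) ∧ (hgt y q : ℝ) ≤ (N : ℝ) ^ ((1:ℝ)/10)),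
    ∑ a ∈ (Finset.Icc 1 q).filter (fun a : ℕ => Nat.gcd a q = 1), Lhat χ y b (N : ℝ) a q ξ

theorem continuous_HiMult {χ : ℝ → ℝ} (hχ : Continuous χ) (y : ℕ) (b : ℤ) (N : ℕ) (Q : ℝ) :
    Continuous (HiMult χ y b N Q) :=
  continuous_finsetSum _ fun _ _ => continuous_finsetSum _ fun _ _ => continuous_Lhat hχ _ _ _ _ _

theorem exists_norm_HiMult_le {χ : ℝ → ℝ} (hχr : ∀ x : ℝ, χ x ∈ Set.Icc (0 : ℝ) 1)
    (hχ0 : ∀ x : ℝ, x ∉ Set.Icc (-(1/4) : ℝ) (1/4) → χ x = 0) {ε : ℝ} (hε : 0 < ε)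
    (hε1 : ε < 1) :
    ∃ C : ℝ, 0 < C ∧ ∀ y : ℕ, 1 ≤ y → ∀ N : ℕ, (y : ℝ) * (N : ℝ) ^ ((1:ℝ)/10) ≤ N →
      ∀ b : ℤ, Int.gcd b y = 1 → ∀ Q : ℝ, 1 ≤ Q → ∀ ξ : ℝ,
        ‖HiMult χ y b N Q ξ‖ ≤ C * Q ^ (-1 + ε) := by
  obtain ⟨C, hC, htot⟩ := exists_rpow_le_mul_totient hε
  have hr1 : (2 : ℝ) ^ (-(1 - ε)) < 1 :=
    Real.rpow_lt_one_of_one_lt_of_neg one_lt_two (by linarith)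
  have hr2 : 0 < (1 - (2 : ℝ) ^ (-(1 - ε)))⁻¹ := inv_pos.2 (by linarith)
  refine ⟨2 * C * (1 - (2 : ℝ) ^ (-(1 - ε)))⁻¹, by positivity, ?_⟩
  intro y hy N hN b hb Q hQ ξ
  rw [HiMult, Finset.sum_sigma']
  set S := ((Finset.Icc 1 (y * ⌈(N : ℝ) ^ ((1:ℝ)/10)⌉₊)).filter
      (fun q : ℕ => Q ≤ (hgt y q : ℝ) ∧ (hgt y q : ℝ) ≤ (N : ℝ) ^ ((1:ℝ)/10))).sigma
    (fun q => (Finset.Icc 1 q).filter (fun a : ℕ => Nat.gcd a q = 1)) with hS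
  have hmem : ∀ p ∈ S, 0 < p.1 ∧ Q ≤ hgt y p.1 ∧ hgt y p.1 ≠ 0 ∧ (Nat.lcm y p.1 : ℝ) ≤ N ∧
      Nat.gcd p.2 p.1 = 1 := by
    intro p hp
    rw [hS, Finset.mem_sigma, Finset.mem_filter, Finset.mem_filter, Finset.mem_Icc] at hp
    obtain ⟨⟨⟨h1, -⟩, h2, h3⟩, -, h4⟩ := hp
    have h5 : hgt y p.1 ≠ 0 := by
      intro h0
      rw [h0] at h2
      norm_num at h2
      linarith
    refine ⟨h1, h2, h5, ?_, h4⟩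
    rw [(hgt_eq_of_ne_zero h1 h5).2.2.1]
    push_cast
    exact le_trans (by gcongr) hN
  set T := S.filter (fun p => |(Nat.lcm y p.1 : ℝ) ^ 2 * (ξ - (p.2 : ℝ) / p.1)| ≤ 1 / 4) with hT
  have hrestrict : ∑ p ∈ S, Lhat χ y b N p.2 p.1 ξ = ∑ p ∈ T, Lhat χ y b N p.2 p.1 ξ := by
    symm
    refine Finset.sum_subset (Finset.filter_subset _ _) fun p hpS hpT => ?_
    have : χ ((Nat.lcm y p.1 : ℝ) ^ 2 * (ξ - (p.2 : ℝ) / p.1)) = 0 := by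
      refine hχ0 _ fun hc => hpT (Finset.mem_filter.2 ⟨hpS, ?_⟩)
      exact abs_le.2 hc
    rw [Lhat, this]
    simp
  rw [hrestrict]
  have hterm : ∀ p ∈ T, ‖Lhat χ y b N p.2 p.1 ξ‖ ≤ 2 * C * (hgt y p.1 : ℝ) ^ (-(1 - ε)) := by
    intro p hp
    obtain ⟨h1, h2, h3, h4, h5⟩ := hmem p (Finset.mem_filter.1 hp).1
    refine (norm_Lhat_le hχr h1 h5 hb h3 h4 ξ).trans ?_
    have hk := Nat.pos_of_ne_zero h3
    have ht : (0 : ℝ) < Nat.totient (hgt y p.1) := by exact_mod_cast Nat.totient_pos.2 hk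
    have hk' : (0 : ℝ) < hgt y p.1 := by exact_mod_cast hk
    have hpow : (0 : ℝ) < (hgt y p.1 : ℝ) ^ (1 - ε) := Real.rpow_pos_of_pos hk' _
    rw [mul_assoc, Real.rpow_neg hk'.le]
    gcongr
    rw [← div_eq_mul_inv, inv_le_iff_one_le_mul₀ ht, div_mul_eq_mul_div, one_le_div hpow]
    exact htot _ hk
  have hlac : ∀ i ∈ T, ∀ j ∈ T, i ≠ j → (hgt y i.1 : ℝ) ≤ hgt y j.1 →
      2 * (hgt y i.1 : ℝ) ≤ hgt y j.1 := by
    intro i hi j hj hne hle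
    obtain ⟨hiS, hi'⟩ := Finset.mem_filter.1 hi
    obtain ⟨hjS, hj'⟩ := Finset.mem_filter.1 hj
    obtain ⟨hi1, -, hi3, -, hi5⟩ := hmem i hiS
    obtain ⟨hj1, -, hj3, -, hj5⟩ := hmem j hjS
    have hy' : (0 : ℝ) < y := by exact_mod_cast hy
    have hli : (Nat.lcm y i.1 : ℝ) = y * hgt y i.1 := by
      exact_mod_cast (hgt_eq_of_ne_zero hi1 hi3).2.2.1
    have hlj : (Nat.lcm y j.1 : ℝ) = y * hgt y j.1 := by
      exact_mod_cast (hgt_eq_of_ne_zero hj1 hj3).2.2.1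
    have hqle : ∀ q : ℕ, 0 < q → (q : ℝ) ≤ Nat.lcm y q := fun q hq =>
      Nat.cast_le.2 (Nat.le_of_dvd (Nat.lcm_pos hy hq) (Nat.dvd_lcm_right y q))
    have := two_mul_le_of_near_fractions hi1 hj1 (fun he => hne ?_) (hqle _ hi1) (hqle _ hj1)
      hi' hj' (by rw [hli, hlj]; gcongr)
    · rw [hli, hlj] at this
      nlinarith
    · obtain ⟨h1, h2⟩ := eq_of_mul_eq_mul_of_coprime hi1 hi5 hj5 he
      exact Sigma.ext h1 (heq_of_eq h2)
  calc ‖∑ p ∈ T, Lhat χ y b N p.2 p.1 ξ‖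
      ≤ ∑ p ∈ T, 2 * C * (hgt y p.1 : ℝ) ^ (-(1 - ε)) :=
        (norm_sum_le _ _).trans (Finset.sum_le_sum hterm)
    _ = 2 * C * ∑ p ∈ T, (hgt y p.1 : ℝ) ^ (-(1 - ε)) := by rw [Finset.mul_sum]
    _ ≤ 2 * C * (Q ^ (-(1 - ε)) * (1 - (2 : ℝ) ^ (-(1 - ε)))⁻¹) := by
        gcongr
        exact sum_rpow_neg_le_of_lacunary T (fun p => (hgt y p.1 : ℝ)) (by linarith)
          (by linarith) (fun p hp => (hmem p (Finset.mem_filter.1 hp).1).2.1) hlac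
    _ = _ := by rw [show -(1 - ε) = -1 + ε by ring]; ring

theorem hasSum_sq_norm_integral_e2pi {G : ℝ → ℂ} (hG : Continuous G) :
    HasSum (fun x : ℤ => ‖∫ ξ in (0:ℝ)..1, G ξ * e2pi ((x : ℝ) * ξ)‖ ^ 2)
      (∫ ξ in (0:ℝ)..1, ‖G ξ‖ ^ 2) := by
  have hL2 : MeasureTheory.MemLp G 2 (MeasureTheory.volume.restrict (Set.Ioc (0:ℝ) 1)) := by
    obtain ⟨M, hM⟩ := isCompact_Icc.exists_bound_of_continuousOn (s := Set.Icc (0:ℝ) 1)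
      hG.continuousOn
    refine MeasureTheory.MemLp.of_bound hG.aestronglyMeasurable M ?_
    filter_upwards [MeasureTheory.ae_restrict_mem measurableSet_Ioc] with ξ hξ
    exact hM ξ (Set.Ioc_subset_Icc_self hξ)
  have h := hasSum_sq_fourierCoeffOn zero_lt_one hL2
  rw [sub_zero, inv_one, one_smul, ← (Equiv.neg ℤ).hasSum_iff] at h
  refine h.congr_fun ?_
  intro x
  simp only [Function.comp_apply, Equiv.neg_apply]
  rw [fourierCoeffOn_eq_integral]
  congr 2
  simp only [sub_zero, div_one, one_smul, neg_neg]
  refine intervalIntegral.integral_congr fun ξ _ => ?_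
  simp only [smul_eq_mul]
  rw [fourier_coe_apply, mul_comm, e2pi]
  congr 2
  push_cast
  ring

theorem integral_e2pi_int_mul (n : ℤ) :
    ∫ ξ in (0:ℝ)..1, e2pi ((n : ℝ) * ξ) = if n = 0 then 1 else 0 := by
  split_ifs with h
  · simp [h, e2pi]
  · have hc : 2 * Real.pi * Complex.I * n ≠ 0 := by
      simp [Real.pi_ne_zero, h]
    have h1 : ∀ ξ : ℝ, e2pi ((n : ℝ) * ξ) = Complex.exp (2 * Real.pi * Complex.I * n * ξ) := by
      intro ξ
      rw [e2pi]
      push_cast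
      ring_nf
    simp_rw [h1]
    rw [integral_exp_mul_complex hc]
    have : Complex.exp (2 * Real.pi * Complex.I * n) = 1 :=
      Complex.exp_eq_one_iff.2 ⟨n, by ring⟩
    simp [this]

theorem continuous_expSum (F : Finset ℤ) :
    Continuous fun ξ : ℝ => ∑ z ∈ F, e2pi (-((z : ℝ) * ξ)) := by
  have := continuous_e2pi
  fun_prop

theorem integral_sq_norm_expSum (F : Finset ℤ) :
    ∫ ξ in (0:ℝ)..1, ‖∑ z ∈ F, e2pi (-((z : ℝ) * ξ))‖ ^ 2 = F.card := by
  refine (hasSum_sq_norm_integral_e2pi (continuous_expSum F)).unique ?_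
  have hcoef : ∀ x : ℤ, ∫ ξ in (0:ℝ)..1, (∑ z ∈ F, e2pi (-((z : ℝ) * ξ))) * e2pi ((x : ℝ) * ξ)
      = if x ∈ F then 1 else 0 := by
    intro x
    have h1 : ∀ ξ : ℝ, (∑ z ∈ F, e2pi (-((z : ℝ) * ξ))) * e2pi ((x : ℝ) * ξ)
        = ∑ z ∈ F, e2pi (((x - z : ℤ) : ℝ) * ξ) := by
      intro ξ
      rw [Finset.sum_mul]
      refine Finset.sum_congr rfl fun z _ => ?_
      rw [← e2pi_add]
      congr 1
      push_cast
      ring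
    simp_rw [h1]
    rw [intervalIntegral.integral_finsetSum]
    · simp_rw [integral_e2pi_int_mul, sub_eq_zero, Finset.sum_ite_eq]
    · intro z _
      exact (continuous_e2pi.comp (by fun_prop)).intervalIntegrable _ _
  simp_rw [hcoef]
  have := hasSum_sum_of_ne_finset_zero (s := F)
    (f := fun x : ℤ => ‖(if x ∈ F then 1 else 0 : ℂ)‖ ^ 2) (L := .unconditional ℤ) (fun x hx => by simp [hx])
  convert this using 1
  rw [Finset.sum_congr rfl (g := fun _ => (1 : ℝ)) (fun x hx => by simp [hx])]
  simp

theorem HiConv_eq_integral {χ : ℝ → ℝ} (hχ : Continuous χ) (y : ℕ) (b : ℤ) (N : ℕ) (Q : ℝ)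
    (F : Finset ℤ) (x : ℤ) :
    HiConv χ y b N Q F x = ∫ ξ in (0:ℝ)..1,
      (HiMult χ y b N Q ξ * ∑ z ∈ F, e2pi (-((z : ℝ) * ξ))) * e2pi ((x : ℝ) * ξ) := by
  have he : ∀ w : ℝ, Continuous fun ξ : ℝ => e2pi (w * ξ) := fun w =>
    continuous_e2pi.comp (by fun_prop)
  have hK : ∀ w : ℤ, HiK χ y b N Q w
      = ∫ ξ in (0:ℝ)..1, HiMult χ y b N Q ξ * e2pi ((w : ℝ) * ξ) := by
    intro w
    simp_rw [HiMult, Finset.sum_mul]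
    have hint : ∀ a q : ℕ, Continuous fun ξ => Lhat χ y b N a q ξ * e2pi ((w : ℝ) * ξ) :=
      fun a q => (continuous_Lhat hχ y b N a q).mul (he w)
    rw [intervalIntegral.integral_finsetSum]
    · refine Finset.sum_congr rfl fun q _ => ?_
      rw [intervalIntegral.integral_finsetSum]
      · rfl
      · exact fun a _ => (hint a q).intervalIntegrable _ _
    · exact fun q _ => (continuous_finsetSum _ fun a _ => hint a q).intervalIntegrable _ _
  simp_rw [HiConv, hK]
  rw [← intervalIntegral.integral_finsetSum]
  · refine intervalIntegral.integral_congr fun ξ _ => ?_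
    simp only [Finset.mul_sum, Finset.sum_mul]
    refine Finset.sum_congr rfl fun z _ => ?_
    rw [mul_assoc, ← e2pi_add]
    congr 2
    push_cast
    ring
  · exact fun z _ => ((continuous_HiMult hχ y b N Q).mul (he _)).intervalIntegrable _ _

theorem l2_norm_HiConv_le {χ : ℝ → ℝ} (hχ : Continuous χ) (y : ℕ) (b : ℤ) (N : ℕ) (Q : ℝ)
    (F : Finset ℤ) {M : ℝ} (hM : ∀ ξ, ‖HiMult χ y b N Q ξ‖ ≤ M) :
    (∑' x : ℤ, (‖HiConv χ y b N Q F x‖₊ : ℝ≥0∞) ^ (2:ℝ)) ^ ((1:ℝ)/2) ≤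
      ENNReal.ofReal (M * (F.card : ℝ) ^ ((1:ℝ)/2)) := by
  have hM0 : 0 ≤ M := (norm_nonneg _).trans (hM 0)
  have hG : Continuous fun ξ => HiMult χ y b N Q ξ * ∑ z ∈ F, e2pi (-((z : ℝ) * ξ)) :=
    (continuous_HiMult hχ y b N Q).mul (continuous_expSum F)
  have hsum := hasSum_sq_norm_integral_e2pi hG
  simp_rw [← HiConv_eq_integral hχ y b N Q F] at hsum
  have hbound : ∫ ξ in (0:ℝ)..1, ‖HiMult χ y b N Q ξ * ∑ z ∈ F, e2pi (-((z : ℝ) * ξ))‖ ^ 2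
      ≤ M ^ 2 * F.card := by
    rw [← integral_sq_norm_expSum F, ← intervalIntegral.integral_const_mul]
    refine intervalIntegral.integral_mono zero_le_one
      ((hG.norm.pow 2).intervalIntegrable _ _)
      ((((continuous_expSum F).norm.pow 2).const_mul _).intervalIntegrable _ _) fun ξ => ?_
    dsimp only
    rw [norm_mul, mul_pow]
    gcongr
    exact hM ξ
  have hpt : ∀ x : ℤ, (‖HiConv χ y b N Q F x‖₊ : ℝ≥0∞) ^ (2:ℝ)
      = ENNReal.ofReal (‖HiConv χ y b N Q F x‖ ^ 2) := by
    intro x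
    rw [ENNReal.ofReal_pow (norm_nonneg _), ofReal_norm, ENNReal.rpow_ofNat,
      enorm_eq_nnnorm]
  simp_rw [hpt]
  rw [← ENNReal.ofReal_tsum_of_nonneg (fun _ => by positivity) hsum.summable, hsum.tsum_eq]
  calc _ ≤ (ENNReal.ofReal (M ^ 2 * F.card)) ^ ((1:ℝ)/2) := by gcongr
    _ = _ := by
      rw [ENNReal.ofReal_rpow_of_nonneg (by positivity) (by norm_num),
        Real.mul_rpow (by positivity) (by positivity), ← Real.sqrt_eq_rpow (M ^ 2),
        Real.sqrt_sq hM0]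

theorem high_term_fixed_scale (χ : ℝ → ℝ) (hχs : ContDiff ℝ (⊤ : ℕ∞) χ)
    (hχr : ∀ x : ℝ, χ x ∈ Set.Icc (0 : ℝ) 1)
    (hχ1 : ∀ x ∈ Set.Icc (-(1/16) : ℝ) (1/16), χ x = 1)
    (hχ0 : ∀ x : ℝ, x ∉ Set.Icc (-(1/4) : ℝ) (1/4) → χ x = 0) :
    ∀ ε : ℝ, 0 < ε →
      ∃ C : ℝ, 0 < C ∧
        ∀ y : ℕ, 1 ≤ y →
          ∃ N0 : ℕ,
            ∀ N : ℕ, N0 < N → ∀ b : ℤ, Int.gcd b y = 1 →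
              ∀ Q : ℝ, 1 ≤ Q → Q ≤ (N : ℝ) ^ ((1:ℝ)/10) →
                ∀ F : Finset ℤ, (∀ x ∈ F, x ∈ Set.Icc (0 : ℤ) (N : ℤ)) →
                  (∑' x : ℤ, (‖HiConv χ y b N Q F x‖₊ : ℝ≥0∞) ^ (2:ℝ)) ^ ((1:ℝ)/2) ≤
                    ENNReal.ofReal (C * Q ^ (-1 + ε) * (F.card : ℝ) ^ ((1:ℝ)/2)) := by
  intro ε hε
  have hχ : Continuous χ := hχs.continuous
  obtain ⟨C, hC, hbound⟩ := exists_norm_HiMult_le hχr hχ0 (ε := min ε (1 / 2))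
    (by positivity) ((min_le_right _ _).trans_lt (by norm_num))
  refine ⟨C, hC, fun y hy => ⟨y ^ 2, fun N hN b hb Q hQ _ F _ => ?_⟩⟩
  have hN1 : (1 : ℝ) ≤ N := by
    exact_mod_cast (Nat.succ_le_of_lt ((Nat.zero_le _).trans_lt hN))
  have hyN : (y : ℝ) * (N : ℝ) ^ ((1:ℝ)/10) ≤ N := by
    have h1 : (y : ℝ) ≤ (N : ℝ) ^ ((1:ℝ)/2) := by
      rw [← Real.sqrt_eq_rpow]
      refine Real.le_sqrt_of_sq_le ?_
      exact_mod_cast hN.le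
    calc (y : ℝ) * (N : ℝ) ^ ((1:ℝ)/10) ≤ (N : ℝ) ^ ((1:ℝ)/2) * (N : ℝ) ^ ((1:ℝ)/10) := by gcongr
      _ = (N : ℝ) ^ ((1:ℝ)/2 + 1/10) := (Real.rpow_add (by linarith) _ _).symm
      _ ≤ (N : ℝ) ^ (1 : ℝ) := Real.rpow_le_rpow_of_exponent_le hN1 (by norm_num)
      _ = N := Real.rpow_one _
  refine l2_norm_HiConv_le hχ y b N Q F fun ξ => (hbound y hy N hyN b hb Q hQ ξ).trans ?_
  gcongr
  exact min_le_left _ _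

end
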